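/- arXiv:1605.08115 — 3 statements merged into one kernel-verified Lean document; each statement's English description precedes it below -/
import Mathlib

section
/- Let L be a right Leibniz algebra over a field of characteristic ≠ 2 and B a two-sided ideal of L. Then for every integer n ≥ 1, B^n ⊆ (^nB) + Es(B), where B^n is the n-th right power of B, ^nB is the n-th left power of B, and Es(B) = B ∩ Ess(L). -/
open Classical

/-- The binary product `mul` is bilinear over `F`. -/
def IsBilin (F : Type*) [Field F] {L : Type*} [AddCommGroup L] [Module F L]
    (mul : L → L → L) : Prop :=
  (∀ a b c : L, mul (a + b) c = mul a c + mul b c) ∧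
  (∀ a b c : L, mul a (b + c) = mul a b + mul a c) ∧
  (∀ (r : F) (a b : L), mul (r • a) b = r • mul a b) ∧
  (∀ (r : F) (a b : L), mul a (r • b) = r • mul a b)

/-- The (right) Leibniz identity: `a(bc) = (ab)c - (ac)b`. -/
def IsRightLeibniz {L : Type*} [AddCommGroup L] (mul : L → L → L) : Prop :=
  ∀ a b c : L, mul a (mul b c) = mul (mul a b) c - mul (mul a c) b

/-- The left Leibniz identity: `a(bc) = (ab)c + b(ac)`. -/
def IsLeftLeibniz {L : Type*} [AddCommGroup L] (mul : L → L → L) : Prop :=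
  ∀ a b c : L, mul a (mul b c) = mul (mul a b) c + mul b (mul a c)

/-- `B` is a two-sided ideal: `xb ∈ B` and `bx ∈ B` for all `x ∈ L`, `b ∈ B`. -/
def IsIdeal {F : Type*} [Field F] {L : Type*} [AddCommGroup L] [Module F L]
    (mul : L → L → L) (B : Submodule F L) : Prop :=
  ∀ (x b : L), b ∈ B → mul x b ∈ B ∧ mul b x ∈ B

/-- `Ess F mul`: the two-sided ideal of `L` generated by the squares `{xx : x ∈ L}`. -/
def Ess (F : Type*) [Field F] {L : Type*} [AddCommGroup L] [Module F L]
    (mul : L → L → L) : Submodule F L :=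
  sInf {I : Submodule F L | (∀ x : L, mul x x ∈ I) ∧ IsIdeal mul I}

/-- The two-sided ideal of `L` generated by a subspace `S`. -/
def idealClosure (F : Type*) [Field F] {L : Type*} [AddCommGroup L] [Module F L]
    (mul : L → L → L) (S : Submodule F L) : Submodule F L :=
  sInf {I : Submodule F L | S ≤ I ∧ IsIdeal mul I}

/-- Right powers: `B^0 = L` (convention), `B^1 = B`,
`B^{n+1} = span {bc : b ∈ B^n, c ∈ B}`. -/
def rpow (F : Type*) [Field F] {L : Type*} [AddCommGroup L] [Module F L]
    (mul : L → L → L) (B : Submodule F L) : ℕ → Submodule F L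
  | 0 => ⊤
  | 1 => B
  | n + 2 => Submodule.span F
      {x : L | ∃ b ∈ rpow F mul B (n + 1), ∃ c ∈ B, x = mul b c}

/-- Left powers: `^0B = L` (convention), `^1B = B`,
`^{n+1}B = span {bc : b ∈ B, c ∈ ^nB}`. -/
def lpow (F : Type*) [Field F] {L : Type*} [AddCommGroup L] [Module F L]
    (mul : L → L → L) (B : Submodule F L) : ℕ → Submodule F L
  | 0 => ⊤
  | 1 => B
  | n + 2 => Submodule.span F
      {x : L | ∃ b ∈ B, ∃ c ∈ lpow F mul B (n + 1), x = mul b c}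

/-- The right-normed product `rightProd mul a [b₁, …, bₖ] = ((…(a b₁)…) bₖ)`,
with all parentheses associated to the left. -/
def rightProd {L : Type*} (mul : L → L → L) : L → List L → L
  | a, [] => a
  | a, b :: l => rightProd mul (mul a b) l

/-- `D_{(L,k)}`: the span of all right-normed products `d a_k ⋯ a_1`
with `d ∈ D` and `a_i ∈ L`. -/
def rightMulSpan (F : Type*) [Field F] {L : Type*} [AddCommGroup L] [Module F L]
    (mul : L → L → L) (D : Submodule F L) (k : ℕ) : Submodule F L :=
  Submodule.span F
    {x : L | ∃ d ∈ D, ∃ l : List L, l.length = k ∧ x = rightProd mul d l}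

/-- A formal nonassociative product (a word of elements of `L` parenthesized
in an arbitrary way). -/
inductive PTree (L : Type*) where
  | leaf : L → PTree L
  | node : PTree L → PTree L → PTree L

/-- Evaluation of a parenthesized product in `L`. -/
def PTree.eval {L : Type*} (mul : L → L → L) : PTree L → L
  | .leaf a => a
  | .node s t => mul (PTree.eval mul s) (PTree.eval mul t)

/-- The list of factors of a parenthesized product, in order. -/
def PTree.leaves {L : Type*} : PTree L → List L
  | .leaf a => [a]
  | .node s t => s.leaves ++ t.leaves

/-- The length (number of factors) of a parenthesized product. -/
def PTree.length {L : Type*} (t : PTree L) : ℕ := t.leaves.length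

/-- The weight of a parenthesized product with respect to `B`:
the number of its factors lying in `B`. -/
noncomputable def PTree.weight {F : Type*} [Field F] {L : Type*} [AddCommGroup L]
    [Module F L] (B : Submodule F L) (t : PTree L) : ℕ :=
  t.leaves.countP (fun y => decide (y ∈ B))

/-- `B^{⟨n⟩}`: the span of all products of elements of `L` of weight at least `n`
with respect to `B`. -/
noncomputable def weightSpan (F : Type*) [Field F] {L : Type*} [AddCommGroup L]
    [Module F L] (mul : L → L → L) (B : Submodule F L) (n : ℕ) : Submodule F L :=
  Submodule.span F
    {x : L | ∃ t : PTree L, n ≤ PTree.weight B t ∧ x = PTree.eval mul t}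

/-- `B^{{n}}`: the span of all length-`n` products all of whose factors lie in `B`. -/
def lengthSpanIn (F : Type*) [Field F] {L : Type*} [AddCommGroup L] [Module F L]
    (mul : L → L → L) (B : Submodule F L) (n : ℕ) : Submodule F L :=
  Submodule.span F
    {x : L | ∃ t : PTree L, PTree.length t = n ∧ (∀ a ∈ PTree.leaves t, a ∈ B) ∧
      x = PTree.eval mul t}

/-!
Polarising the squares shows that the product is anticommutative modulo `Ess(L)`. Hence, for `u` in
`^nB` and `c` in `B`, the product `uc` differs from `-(cu)`, an element of `^{n+1}B`, by `uc + cu`,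
which lies in `B ∩ Ess(L)` because `B` is closed under multiplication. So each right multiplication
in a right power can be traded for a left one at the cost of an element of `Es(B)`.
-/

section

variable {F : Type*} [Field F] {L : Type*} [AddCommGroup L] [Module F L]
  {mul : L → L → L} {B S : Submodule F L} {n : ℕ}

theorem mul_self_mem_Ess (x : L) : mul x x ∈ Ess F mul :=
  Submodule.mem_sInf.2 fun _ hI => hI.1 x

theorem isIdeal_Ess : IsIdeal mul (Ess F mul) := fun x b hb =>
  ⟨Submodule.mem_sInf.2 fun I hI => (hI.2 x b (Submodule.mem_sInf.1 hb I hI)).1,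
    Submodule.mem_sInf.2 fun I hI => (hI.2 x b (Submodule.mem_sInf.1 hb I hI)).2⟩

theorem mul_add_mul_swap_mem_Ess
    (hadd_left : ∀ a b c : L, mul (a + b) c = mul a c + mul b c)
    (hadd_right : ∀ a b c : L, mul a (b + c) = mul a b + mul a c) (x y : L) :
    mul x y + mul y x ∈ Ess F mul := by
  have polarization :
      mul x y + mul y x = mul (x + y) (x + y) - mul x x - mul y y := by
    rw [hadd_left, hadd_right, hadd_right]
    abel
  rw [polarization]
  exact sub_mem (sub_mem (mul_self_mem_Ess _) (mul_self_mem_Ess _)) (mul_self_mem_Ess _)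

theorem rpow_succ_le_iff (hn : 1 ≤ n) :
    rpow F mul B (n + 1) ≤ S ↔ ∀ b ∈ rpow F mul B n, ∀ c ∈ B, mul b c ∈ S := by
  obtain ⟨m, rfl⟩ := Nat.exists_eq_add_of_le' hn
  rw [rpow, Submodule.span_le]
  exact ⟨fun h b hb c hc => h ⟨b, hb, c, hc, rfl⟩,
    fun h _ ⟨b, hb, c, hc, hx⟩ => hx ▸ h b hb c hc⟩

theorem lpow_succ_le_iff (hn : 1 ≤ n) :
    lpow F mul B (n + 1) ≤ S ↔ ∀ b ∈ B, ∀ c ∈ lpow F mul B n, mul b c ∈ S := by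
  obtain ⟨m, rfl⟩ := Nat.exists_eq_add_of_le' hn
  rw [lpow, Submodule.span_le]
  exact ⟨fun h b hb c hc => h ⟨b, hb, c, hc, rfl⟩,
    fun h _ ⟨b, hb, c, hc, hx⟩ => hx ▸ h b hb c hc⟩

theorem mul_mem_lpow_succ (hn : 1 ≤ n) {b c : L} (hb : b ∈ B) (hc : c ∈ lpow F mul B n) :
    mul b c ∈ lpow F mul B (n + 1) :=
  (lpow_succ_le_iff hn).1 le_rfl b hb c hc

theorem lpow_le_self (hB : ∀ a ∈ B, ∀ b ∈ B, mul a b ∈ B) (hn : 1 ≤ n) :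
    lpow F mul B n ≤ B := by
  induction n, hn using Nat.le_induction with
  | base => exact le_rfl
  | succ n hn ih => exact (lpow_succ_le_iff hn).2 fun b hb c hc => hB b hb c (ih hc)

theorem mul_mem_inf_Ess (hB : ∀ a ∈ B, ∀ b ∈ B, mul a b ∈ B) {v c : L}
    (hv : v ∈ B ⊓ Ess F mul) (hc : c ∈ B) : mul v c ∈ B ⊓ Ess F mul :=
  ⟨hB v hv.1 c hc, (isIdeal_Ess c v hv.2).2⟩

theorem mul_mem_lpow_succ_sup_inf_Ess
    (hadd_left : ∀ a b c : L, mul (a + b) c = mul a c + mul b c)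
    (hadd_right : ∀ a b c : L, mul a (b + c) = mul a b + mul a c)
    (hB : ∀ a ∈ B, ∀ b ∈ B, mul a b ∈ B) (hn : 1 ≤ n) {u c : L}
    (hu : u ∈ lpow F mul B n) (hc : c ∈ B) :
    mul u c ∈ lpow F mul B (n + 1) ⊔ (B ⊓ Ess F mul) := by
  have huB : u ∈ B := lpow_le_self hB hn hu
  have hswap : mul u c + mul c u ∈ B ⊓ Ess F mul :=
    ⟨add_mem (hB u huB c hc) (hB c hc u huB), mul_add_mul_swap_mem_Ess hadd_left hadd_right u c⟩
  have hdecomp : mul u c = -mul c u + (mul u c + mul c u) := by abel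
  rw [hdecomp]
  exact Submodule.add_mem_sup (neg_mem (mul_mem_lpow_succ hn hc hu)) hswap

theorem rpow_le_lpow_sup_Es_general
    (hadd_left : ∀ a b c : L, mul (a + b) c = mul a c + mul b c)
    (hadd_right : ∀ a b c : L, mul a (b + c) = mul a b + mul a c)
    (hB : ∀ a ∈ B, ∀ b ∈ B, mul a b ∈ B) (hn : 1 ≤ n) :
    rpow F mul B n ≤ lpow F mul B n ⊔ (B ⊓ Ess F mul) := by
  induction n, hn using Nat.le_induction with
  | base => exact le_sup_left
  | succ n hn ih =>
    refine (rpow_succ_le_iff hn).2 fun b hb c hc => ?_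
    obtain ⟨u, hu, v, hv, rfl⟩ := Submodule.mem_sup.1 (ih hb)
    rw [hadd_left]
    exact add_mem (mul_mem_lpow_succ_sup_inf_Ess hadd_left hadd_right hB hn hu hc)
      (Submodule.mem_sup_right (mul_mem_inf_Ess hB hv hc))

end

/-- For an ideal `B` of a right Leibniz algebra,
`B^n ⊆ (^nB) + Es(B)` for all `n ≥ 1`. -/
theorem rpow_le_lpow_sup_Es
    {F : Type*} [Field F] {L : Type*} [AddCommGroup L] [Module F L]
    (h2 : (2 : F) ≠ 0) (mul : L → L → L)
    (hbil : IsBilin F mul) (hleib : IsRightLeibniz mul)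
    (B : Submodule F L) (hB : IsIdeal mul B) :
    ∀ n : ℕ, 1 ≤ n → rpow F mul B n ≤ lpow F mul B n ⊔ (B ⊓ Ess F mul) := fun _ hn =>
  rpow_le_lpow_sup_Es_general hbil.1 hbil.2.1 (fun a _ b hb => (hB a b hb).1) hn
end

section
/- Let L be a right Leibniz algebra over a field of characteristic ≠ 2 and B a two-sided ideal of L that is Es_{k'}-right nil for some integer k' ≥ 1. If B is right nilpotent (B^{ℓ'} = 0 for some ℓ' ≥ 1), then B is strongly nilpotent (B^{⟨ℓ⟩} = 0 for some ℓ ≥ 1). -/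
open Classical

/-!
In a right Leibniz algebra right multiplications are derivations, so every right power `B ^ n` of an
ideal is stable under right multiplication by `L`. The Leibniz identity moreover rewrites
`y (s t)` as `(y s) t - (y t) s`, so right multiplication by any product of weight `w` is a
combination of iterated right multiplications by its factors, `w` of which lie in `B`; hence it maps
`B ^ n` into `B ^ (n + w)`. Thus a product of weight `w` lies in `B ^ w`.
-/

namespace PTree

variable {F : Type*} [Field F] {L : Type*} [AddCommGroup L] [Module F L] {B : Submodule F L}

theorem weight_leaf_of_mem {a : L} (ha : a ∈ B) : (leaf a).weight B = 1 := by
  simp [weight, leaves, ha]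

theorem weight_leaf_of_notMem {a : L} (ha : a ∉ B) : (leaf a).weight B = 0 := by
  simp [weight, leaves, ha]

theorem weight_node (B : Submodule F L) (s t : PTree L) :
    (node s t).weight B = s.weight B + t.weight B :=
  List.countP_append

end PTree

section RightPowers

variable {F : Type*} [Field F] {L : Type*} [AddCommGroup L] [Module F L]
  {mul : L → L → L} {B : Submodule F L}

theorem IsBilin.isLinearMap_mul_right (hbil : IsBilin F mul) (x : L) :
    IsLinearMap F (mul · x) :=
  ⟨fun a b ↦ hbil.1 a b x, fun r a ↦ hbil.2.2.1 r a x⟩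

theorem IsRightLeibniz.mul_mul_eq_add (hleib : IsRightLeibniz mul) (a b c : L) :
    mul (mul a b) c = mul a (mul b c) + mul (mul a c) b :=
  sub_eq_iff_eq_add.mp (hleib a b c).symm

theorem mul_mem_rpow_succ (hB : IsIdeal mul B) {n : ℕ} {y c : L}
    (hy : y ∈ rpow F mul B n) (hc : c ∈ B) : mul y c ∈ rpow F mul B (n + 1) := by
  cases n with
  | zero => exact (hB y c hc).1
  | succ m => exact Submodule.subset_span ⟨y, hy, c, hc, rfl⟩

theorem mul_mem_rpow (hbil : IsBilin F mul) (hleib : IsRightLeibniz mul) (hB : IsIdeal mul B)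
    (x : L) : ∀ {n : ℕ} {y : L}, y ∈ rpow F mul B n → mul y x ∈ rpow F mul B n
  | 0, _, _ => Submodule.mem_top
  | 1, y, hy => (hB x y hy).2
  | n + 2, y, hy => by
    let mulRight : L →ₗ[F] L := (hbil.isLinearMap_mul_right x).mk' _
    suffices rpow F mul B (n + 2) ≤ (rpow F mul B (n + 2)).comap mulRight from this hy
    refine Submodule.span_le.mpr ?_
    rintro _ ⟨b, hb, c, hc, rfl⟩
    have hbx : mul b x ∈ rpow F mul B (n + 1) := mul_mem_rpow hbil hleib hB x hb
    have hcx : mul c x ∈ B := (hB x c hc).2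
    change mul (mul b c) x ∈ rpow F mul B (n + 2)
    rw [hleib.mul_mul_eq_add]
    exact add_mem (mul_mem_rpow_succ hB hb hcx) (mul_mem_rpow_succ hB hbx hc)

theorem rpow_antitone (hbil : IsBilin F mul) (hleib : IsRightLeibniz mul) (hB : IsIdeal mul B) :
    Antitone (rpow F mul B) := by
  refine antitone_nat_of_succ_le fun n ↦ ?_
  cases n with
  | zero => exact le_top
  | succ m =>
    refine Submodule.span_le.mpr ?_
    rintro _ ⟨b, hb, c, -, rfl⟩
    exact mul_mem_rpow hbil hleib hB c hb

theorem mul_eval_mem_rpow_add_weight (hbil : IsBilin F mul) (hleib : IsRightLeibniz mul)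
    (hB : IsIdeal mul B) (t : PTree L) {n : ℕ} {y : L} (hy : y ∈ rpow F mul B n) :
    mul y (t.eval mul) ∈ rpow F mul B (n + t.weight B) := by
  induction t generalizing n y with
  | leaf a =>
    by_cases ha : a ∈ B
    · rw [PTree.weight_leaf_of_mem ha]
      exact mul_mem_rpow_succ hB hy ha
    · rw [PTree.weight_leaf_of_notMem ha]
      exact mul_mem_rpow hbil hleib hB a hy
  | node s t ihs iht =>
    have hst : mul (mul y (s.eval mul)) (t.eval mul) ∈
        rpow F mul B (n + s.weight B + t.weight B) := iht (ihs hy)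
    have hts : mul (mul y (t.eval mul)) (s.eval mul) ∈
        rpow F mul B (n + t.weight B + s.weight B) := ihs (iht hy)
    rw [PTree.weight_node, PTree.eval, hleib, ← add_assoc]
    exact sub_mem hst (add_right_comm n _ _ ▸ hts)

theorem eval_mem_rpow_weight (hbil : IsBilin F mul) (hleib : IsRightLeibniz mul)
    (hB : IsIdeal mul B) (t : PTree L) : t.eval mul ∈ rpow F mul B (t.weight B) := by
  induction t with
  | leaf a =>
    by_cases ha : a ∈ B
    · rw [PTree.weight_leaf_of_mem ha]
      exact ha
    · rw [PTree.weight_leaf_of_notMem ha]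
      exact Submodule.mem_top
  | node s t ihs _ =>
    rw [PTree.weight_node]
    exact mul_eval_mem_rpow_add_weight hbil hleib hB t ihs

theorem weightSpan_le_rpow (hbil : IsBilin F mul) (hleib : IsRightLeibniz mul)
    (hB : IsIdeal mul B) (n : ℕ) : weightSpan F mul B n ≤ rpow F mul B n := by
  refine Submodule.span_le.mpr ?_
  rintro _ ⟨t, hnt, rfl⟩
  exact rpow_antitone hbil hleib hB hnt (eval_mem_rpow_weight hbil hleib hB t)

end RightPowers

theorem right_nilpotent_ideal_strongly_nilpotent_general
    {F : Type*} [Field F] {L : Type*} [AddCommGroup L] [Module F L] {mul : L → L → L}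
    (hbil : IsBilin F mul) (hleib : IsRightLeibniz mul)
    {B : Submodule F L} (hB : IsIdeal mul B) {l : ℕ} (hl : rpow F mul B l = ⊥) :
    weightSpan F mul B l = ⊥ :=
  eq_bot_mono (weightSpan_le_rpow hbil hleib hB l) hl

/-- An `Es_{k'}`-right nil ideal that is right nilpotent is
strongly nilpotent. -/
theorem right_nilpotent_ideal_strongly_nilpotent
    {F : Type*} [Field F] {L : Type*} [AddCommGroup L] [Module F L]
    (h2 : (2 : F) ≠ 0) (mul : L → L → L)
    (hbil : IsBilin F mul) (hleib : IsRightLeibniz mul)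
    (B : Submodule F L) (hB : IsIdeal mul B)
    (k' : ℕ) (hk' : 1 ≤ k')
    (hnil : rightMulSpan F mul (B ⊓ Ess F mul) k' = ⊥)
    (hrnil : ∃ l', 1 ≤ l' ∧ rpow F mul B l' = ⊥) :
    ∃ l, 1 ≤ l ∧ weightSpan F mul B l = ⊥ := by
  obtain ⟨l, hl, hpow⟩ := hrnil
  exact ⟨l, hl, right_nilpotent_ideal_strongly_nilpotent_general hbil hleib hB hpow⟩
end

section
/- Let L be a right Leibniz algebra over a field of characteristic ≠ 2. Then the following are equivalent: (i) L is right nilpotent (L^n = 0 for some n, where L^1 = L and L^{k+1} = span{bc : b ∈ L^k, c ∈ L}); (ii) L is nilpotent (every product of some fixed length n of elements of L, arbitrarily parenthesized, vanishes); (iii) L is strongly nilpotent (every product of at least some fixed number n of elements of L, arbitrarily parenthesized, vanishes). -/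
open Classical

/-!
Let `B` be a subspace. Rewriting `a(bc) = (ab)c - (ac)b` moves brackets to the left, so induction
on `n` gives `B^m B^n ⊆ B^{m+n}`, and hence every product of `n` elements of `B`, however
parenthesized, lies in `B^n`. Thus `B^n` is the span of all products of length `n` of elements
of `B`. Once one right power vanishes so do all later ones, and the three notions of nilpotency
coincide.
-/

theorem IsRightLeibniz.map₂_map₂_le {R M : Type*} [CommRing R] [AddCommGroup M] [Module R M]
    {f : M →ₗ[R] M →ₗ[R] M} (hf : IsRightLeibniz fun a b ↦ f a b) (P Q S : Submodule R M) :
    P.map₂ f (Q.map₂ f S) ≤ (P.map₂ f Q).map₂ f S ⊔ (P.map₂ f S).map₂ f Q := by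
  refine Submodule.map₂_le.2 fun a ha ↦ ?_
  suffices Q.map₂ f S ≤ ((P.map₂ f Q).map₂ f S ⊔ (P.map₂ f S).map₂ f Q).comap (f a) from this
  refine Submodule.map₂_le.2 fun b hb c hc ↦ ?_
  rw [Submodule.mem_comap, show f a (f b c) = f (f a b) c - f (f a c) b from hf a b c]
  exact Submodule.sub_mem _
    (Submodule.mem_sup_left <|
      Submodule.apply_mem_map₂ f (Submodule.apply_mem_map₂ f ha hb) hc)
    (Submodule.mem_sup_right <|
      Submodule.apply_mem_map₂ f (Submodule.apply_mem_map₂ f ha hc) hb)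

namespace PTree

variable {L : Type*}

@[simp]
theorem length_node (s t : PTree L) : (node s t).length = s.length + t.length :=
  List.length_append

theorem one_le_length : ∀ t : PTree L, 1 ≤ t.length
  | leaf _ => le_rfl
  | node s t => by simpa using Nat.le_add_right_of_le s.one_le_length

theorem forall_mem_leaves_node {p : L → Prop} {s t : PTree L} :
    (∀ a ∈ (node s t).leaves, p a) ↔ (∀ a ∈ s.leaves, p a) ∧ ∀ a ∈ t.leaves, p a :=
  List.forall_mem_append

end PTree

section Powers

variable {F : Type*} [Field F] {L : Type*} [AddCommGroup L] [Module F L] {mul : L → L → L}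

/-- A product satisfying `IsBilin`, bundled as a bilinear map so that the product of two subspaces
is `Submodule.map₂`. -/
def IsBilin.toLinearMap (hbil : IsBilin F mul) : L →ₗ[F] L →ₗ[F] L :=
  LinearMap.mk₂ F mul hbil.1 hbil.2.2.1 hbil.2.1 hbil.2.2.2

theorem rpow_succ (hbil : IsBilin F mul) (B : Submodule F L) {n : ℕ} (hn : 1 ≤ n) :
    rpow F mul B (n + 1) = (rpow F mul B n).map₂ hbil.toLinearMap B := by
  obtain ⟨k, rfl⟩ := Nat.exists_eq_add_of_le' hn
  rw [Submodule.map₂_eq_span_image2, rpow]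
  congr 1
  ext x
  simp only [Set.mem_ofPred_eq, Set.mem_image2, SetLike.mem_coe, eq_comm (a := x)]
  rfl

theorem rpow_eq_bot_of_le (hbil : IsBilin F mul) {B : Submodule F L} {m n : ℕ} (hm : 1 ≤ m)
    (hmn : m ≤ n) (hbot : rpow F mul B m = ⊥) : rpow F mul B n = ⊥ := by
  induction n, hmn using Nat.le_induction with
  | base => exact hbot
  | succ n hmn ih => rw [rpow_succ hbil B (hm.trans hmn), ih, Submodule.map₂_bot_left]

theorem map₂_rpow_rpow_le (hbil : IsBilin F mul) (hleib : IsRightLeibniz mul)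
    (B : Submodule F L) {m n : ℕ} (hm : 1 ≤ m) (hn : 1 ≤ n) :
    (rpow F mul B m).map₂ hbil.toLinearMap (rpow F mul B n) ≤ rpow F mul B (m + n) := by
  induction n, hn using Nat.le_induction generalizing m with
  | base => exact (rpow_succ hbil B hm).ge
  | succ n hn ih =>
    rw [rpow_succ hbil B hn]
    refine (IsRightLeibniz.map₂_map₂_le hleib _ _ _).trans (sup_le ?_ ?_)
    · rw [← add_assoc, rpow_succ hbil B (Nat.le_add_right_of_le hm)]
      exact Submodule.map₂_le_map₂_left (ih hm)
    · rw [← rpow_succ hbil B hm, ← add_assoc, add_right_comm]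
      exact ih (Nat.le_add_left 1 m)

theorem eval_mem_rpow_length (hbil : IsBilin F mul) (hleib : IsRightLeibniz mul)
    {B : Submodule F L} {t : PTree L} (ht : ∀ a ∈ t.leaves, a ∈ B) :
    t.eval mul ∈ rpow F mul B t.length := by
  induction t with
  | leaf a => exact ht a (List.mem_singleton_self a)
  | node s t ihs iht =>
    obtain ⟨hs, ht⟩ := PTree.forall_mem_leaves_node.1 ht
    rw [PTree.length_node]
    exact map₂_rpow_rpow_le hbil hleib B s.one_le_length t.one_le_length
      (Submodule.apply_mem_map₂ hbil.toLinearMap (ihs hs) (iht ht))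

theorem lengthSpanIn_le_iff {B S : Submodule F L} {n : ℕ} :
    lengthSpanIn F mul B n ≤ S ↔
      ∀ t : PTree L, (∀ a ∈ t.leaves, a ∈ B) → t.length = n → t.eval mul ∈ S := by
  rw [lengthSpanIn, Submodule.span_le]
  constructor
  · exact fun h t ht hlen ↦ h ⟨t, hlen, ht, rfl⟩
  · rintro h _ ⟨t, hlen, ht, rfl⟩
    exact h t ht hlen

theorem lengthSpanIn_eq_bot_iff {B : Submodule F L} {n : ℕ} :
    lengthSpanIn F mul B n = ⊥ ↔
      ∀ t : PTree L, (∀ a ∈ t.leaves, a ∈ B) → t.length = n → t.eval mul = 0 := by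
  simp only [← le_bot_iff, lengthSpanIn_le_iff, Submodule.mem_bot]

theorem le_lengthSpanIn_one (mul : L → L → L) (B : Submodule F L) :
    B ≤ lengthSpanIn F mul B 1 :=
  fun a ha ↦ Submodule.subset_span ⟨.leaf a, rfl, List.forall_mem_singleton.2 ha, rfl⟩

theorem map₂_lengthSpanIn_lengthSpanIn_le (hbil : IsBilin F mul) (B : Submodule F L) (m n : ℕ) :
    (lengthSpanIn F mul B m).map₂ hbil.toLinearMap (lengthSpanIn F mul B n) ≤
      lengthSpanIn F mul B (m + n) := by
  rw [lengthSpanIn, lengthSpanIn, Submodule.map₂_span_span, Submodule.span_le]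
  rintro _ ⟨_, ⟨s, rfl, hs, rfl⟩, _, ⟨t, rfl, ht, rfl⟩, rfl⟩
  exact Submodule.subset_span
    ⟨.node s t, s.length_node t, PTree.forall_mem_leaves_node.2 ⟨hs, ht⟩, rfl⟩

theorem rpow_le_lengthSpanIn (hbil : IsBilin F mul) (B : Submodule F L) {n : ℕ} (hn : 1 ≤ n) :
    rpow F mul B n ≤ lengthSpanIn F mul B n := by
  induction n, hn using Nat.le_induction with
  | base => exact le_lengthSpanIn_one mul B
  | succ n hn ih =>
    rw [rpow_succ hbil B hn]
    exact (Submodule.map₂_le_map₂ ih (le_lengthSpanIn_one mul B)).trans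
      (map₂_lengthSpanIn_lengthSpanIn_le hbil B n 1)

theorem rpow_eq_lengthSpanIn (hbil : IsBilin F mul) (hleib : IsRightLeibniz mul)
    (B : Submodule F L) {n : ℕ} (hn : 1 ≤ n) : rpow F mul B n = lengthSpanIn F mul B n :=
  (rpow_le_lengthSpanIn hbil B hn).antisymm <|
    lengthSpanIn_le_iff.2 fun _ ht hlen ↦ hlen ▸ eval_mem_rpow_length hbil hleib ht

theorem rpow_eq_bot_iff (hbil : IsBilin F mul) (hleib : IsRightLeibniz mul)
    {B : Submodule F L} {n : ℕ} (hn : 1 ≤ n) :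
    rpow F mul B n = ⊥ ↔
      ∀ t : PTree L, (∀ a ∈ t.leaves, a ∈ B) → t.length = n → t.eval mul = 0 := by
  rw [rpow_eq_lengthSpanIn hbil hleib B hn, lengthSpanIn_eq_bot_iff]

theorem nilpotency_equivalences_algebra_general (hbil : IsBilin F mul)
    (hleib : IsRightLeibniz mul) (B : Submodule F L) :
    List.TFAE [
      ∃ n, 1 ≤ n ∧ rpow F mul B n = ⊥,
      ∃ n, 1 ≤ n ∧ ∀ t : PTree L, (∀ a ∈ t.leaves, a ∈ B) → t.length = n → t.eval mul = 0,
      ∃ n, 1 ≤ n ∧ ∀ t : PTree L, (∀ a ∈ t.leaves, a ∈ B) → n ≤ t.length → t.eval mul = 0] := by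
  tfae_have 1 → 3 := fun ⟨n, hn, hbot⟩ ↦ ⟨n, hn, fun t ht hlen ↦
    (rpow_eq_bot_iff hbil hleib (hn.trans hlen)).1 (rpow_eq_bot_of_le hbil hn hlen hbot) t ht rfl⟩
  tfae_have 3 → 2 := fun ⟨n, hn, h⟩ ↦ ⟨n, hn, fun t ht hlen ↦ h t ht hlen.ge⟩
  tfae_have 2 → 1 := fun ⟨n, hn, h⟩ ↦ ⟨n, hn, (rpow_eq_bot_iff hbil hleib hn).2 h⟩
  tfae_finish

end Powers

/-- For a right Leibniz algebra `L`, right nilpotency,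
nilpotency and strong nilpotency are equivalent. -/
theorem nilpotency_equivalences_algebra
    {F : Type*} [Field F] {L : Type*} [AddCommGroup L] [Module F L]
    (h2 : (2 : F) ≠ 0) (mul : L → L → L)
    (hbil : IsBilin F mul) (hleib : IsRightLeibniz mul) :
    ((∃ n, 1 ≤ n ∧ rpow F mul (⊤ : Submodule F L) n = ⊥) ↔
        (∃ n, 1 ≤ n ∧ ∀ t : PTree L, PTree.length t = n → PTree.eval mul t = 0)) ∧
    ((∃ n, 1 ≤ n ∧ ∀ t : PTree L, PTree.length t = n → PTree.eval mul t = 0) ↔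
        (∃ n, 1 ≤ n ∧ ∀ t : PTree L, n ≤ PTree.length t → PTree.eval mul t = 0)) := by
  have htfae := nilpotency_equivalences_algebra_general hbil hleib ⊤
  simp only [Submodule.mem_top, implies_true, forall_const] at htfae
  exact ⟨htfae.out 0 1, htfae.out 1 2⟩
end
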